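/- There exists a 3-way cutting scheme whose maximum separation density is at most 12/11: there exist a probability space (Ω, 𝒜, μ) and a map c : Ω → (Δ_3 → {1,2,3}) with c(ω)(e_i) = i for every ω and every i ∈ {1,2,3}, such that for all x, y ∈ Δ_3 the set {ω : c(ω)(x) ≠ c(ω)(y)} is measurable and μ{ω : c(ω)(x) ≠ c(ω)(y)} ≤ (12/11)·(1/2)·∑_{i=1}^3 |x_i − y_i|. -/

import Mathlib

open MeasureTheory

/-!
Compare `x` coordinatewise with a random threshold vector `θ` and keep only the set of coordinates
where `x` exceeds `θ`; a priority order on the terminals turns this set into a label. If every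
`θ i` is uniform on `[0, 1)`, the expected number of comparisons on which `x` and `y` disagree is
at most `∑ i, |x i - y i|`, so it remains to compare disagreements of labels with disagreements of
comparisons.

* If `∑ i, θ i = 1` (a ball cut), the set of exceeded thresholds is almost surely neither empty nor
  everything; then the labels of `x` and `y` under an order and under its reverse disagree at most
  as often, in total, as the comparisons do.
* If all thresholds equal some `t ≥ 1 / 2` (a corner cut), at most one is exceeded; then the labels
  under three orders with different last terminals disagree at most twice as often.

Ball cuts for `t < 2 / 3` and corner cuts for `t ≥ 2 / 3` give uniform thresholds. Giving density
`6 / 11` to each of the two ball orders and `3 / 11` to each of the three corner orders yields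
total mass `2 * (6 / 11) * (2 / 3) + 3 * (3 / 11) * (1 / 3) = 1` and, in both cases, a separation
density of at most `6 / 11` per disagreement.
-/

open Set
open scoped ENNReal NNReal symmDiff

namespace ThreeWayCut

section Exceeded

variable {ι : Type*} [Fintype ι]

/-- The coordinates in which the point `x` lies strictly above the threshold vector `θ`; a cut
sees `x` only through this set. -/
noncomputable def exceeded (θ x : ι → ℝ) : Finset ι := {i | θ i < x i}

@[simp]
lemma mem_exceeded {θ x : ι → ℝ} {i : ι} : i ∈ exceeded θ x ↔ θ i < x i := by
  simp [exceeded]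

lemma exceeded_single [DecidableEq ι] {θ : ι → ℝ} (hθ : ∀ i, θ i ∈ Ico (0 : ℝ) 1) (i : ι) :
    exceeded θ (Pi.single i 1) = {i} := by
  ext j
  obtain rfl | hji := eq_or_ne j i
  · simpa using (hθ j).2
  · simpa [hji] using (hθ j).1

lemma exceeded_nonempty_of_sum_eq {θ x : ι → ℝ} (hsum : ∑ i, θ i = ∑ i, x i) (hne : θ ≠ x) :
    (exceeded θ x).Nonempty := by
  by_contra! h
  have hle : ∀ i, x i ≤ θ i := fun i => by
    simpa using Finset.eq_empty_iff_forall_notMem.mp h i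
  have heq := (Finset.sum_eq_sum_iff_of_le fun i _ => hle i).mp hsum.symm
  exact hne (funext fun i => (heq i (Finset.mem_univ i)).symm)

lemma exceeded_ne_univ_of_sum_eq [Nonempty ι] {θ x : ι → ℝ} (hsum : ∑ i, θ i = ∑ i, x i) :
    exceeded θ x ≠ Finset.univ := fun h =>
  hsum.not_lt <| Finset.sum_lt_sum_of_nonempty Finset.univ_nonempty fun _ hi =>
    mem_exceeded.mp (h ▸ hi)

lemma card_exceeded_le_one {θ x : ι → ℝ} (hx : x ∈ stdSimplex ℝ ι) (hθ : ∀ i, 1 / 2 ≤ θ i) :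
    (exceeded θ x).card ≤ 1 := by
  refine Finset.card_le_one.mpr fun i hi j hj => ?_
  by_contra hij
  have hpair : x i + x j ≤ ∑ l, x l :=
    Finset.add_le_sum (fun l _ => hx.1 l) (Finset.mem_univ i) (Finset.mem_univ j) hij
  linarith [hx.2, hθ i, hθ j, mem_exceeded.mp hi, mem_exceeded.mp hj]

lemma mem_symmDiff_exceeded [DecidableEq ι] {θ x y : ι → ℝ} {i : ι} :
    i ∈ exceeded θ x ∆ exceeded θ y ↔ θ i ∈ Ico (min (x i) (y i)) (max (x i) (y i)) := by
  simp only [Finset.mem_symmDiff, mem_exceeded, mem_Ico]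
  grind

lemma lintegral_card_symmDiff_exceeded_le [DecidableEq ι] {T : Type*} [MeasurableSpace T]
    {ν : Measure T} {θ : T → ι → ℝ} (hθ : Measurable θ)
    (hν : ∀ i, ν.map (fun t => θ t i) ≤ volume) (x y : ι → ℝ) :
    ∫⁻ t, ((exceeded (θ t) x ∆ exceeded (θ t) y).card : ℝ≥0∞) ∂ν ≤
      ENNReal.ofReal (∑ i, |x i - y i|) := by
  let I (i : ι) : Set ℝ := Ico (min (x i) (y i)) (max (x i) (y i))
  have hθi (i : ι) : Measurable fun t => θ t i := measurable_pi_iff.mp hθ i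
  have hI (i : ι) : MeasurableSet ((fun t => θ t i) ⁻¹' I i) := hθi i measurableSet_Ico
  have hcard (t : T) : ((exceeded (θ t) x ∆ exceeded (θ t) y).card : ℝ≥0∞) =
      ∑ i, ((fun t => θ t i) ⁻¹' I i).indicator 1 t := by
    have hmem (i : ι) : t ∈ (fun t => θ t i) ⁻¹' I i ↔ i ∈ exceeded (θ t) x ∆ exceeded (θ t) y :=
      mem_symmDiff_exceeded.symm
    classical simp [indicator_apply, hmem]
  calc ∫⁻ t, ((exceeded (θ t) x ∆ exceeded (θ t) y).card : ℝ≥0∞) ∂ν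
    _ = ∑ i, ν ((fun t => θ t i) ⁻¹' I i) := by
        simp_rw [hcard]
        rw [lintegral_finsetSum _ fun i _ => measurable_one.indicator (hI i)]
        simp_rw [lintegral_indicator_one (hI _)]
    _ = ∑ i, ν.map (fun t => θ t i) (I i) := by
        simp_rw [I, Measure.map_apply (hθi _) measurableSet_Ico]
    _ ≤ ∑ i, volume (I i) := Finset.sum_le_sum fun i _ => hν i _
    _ = ENNReal.ofReal (∑ i, |x i - y i|) := by
        simp_rw [I, Real.volume_Ico, max_sub_min_eq_abs',
          ENNReal.ofReal_sum_of_nonneg fun i _ => abs_nonneg (x i - y i)]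

end Exceeded

section PriorityLabel

/-- Three orders on the terminals, listed from first to last. Orders `0` and `1` are reverse to
each other and serve as ball orders; all three, having different last terminals, serve as corner
orders. -/
def priority : Fin 3 → Fin 3 → Fin 3 := ![![0, 1, 2], ![2, 1, 0], ![0, 2, 1]]

/-- The label given by the `k`-th priority order to a point with set `A` of exceeded thresholds:
the first element of `A`, or the last terminal if neither of the first two is in `A`. -/
def priorityLabel (k : Fin 3) (A : Finset (Fin 3)) : Fin 3 :=
  if priority k 0 ∈ A then priority k 0 else if priority k 1 ∈ A then priority k 1 else priority k 2

/-- The priority orders under which points with sets `A` and `B` of exceeded thresholds get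
different labels. -/
def separatingOrders (A B : Finset (Fin 3)) : Finset (Fin 3) :=
  {k | priorityLabel k A ≠ priorityLabel k B}

lemma priorityLabel_singleton (k i : Fin 3) : priorityLabel k {i} = i := by
  decide +revert

lemma card_separatingOrders_erase_two_le {A B : Finset (Fin 3)}
    (hA : A.Nonempty) (hA' : A ≠ Finset.univ) (hB : B.Nonempty) (hB' : B ≠ Finset.univ) :
    ((separatingOrders A B).erase 2).card ≤ (A ∆ B).card := by
  decide +revert

lemma card_separatingOrders_le {A B : Finset (Fin 3)} (hA : A.card ≤ 1) (hB : B.card ≤ 1) :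
    (separatingOrders A B).card ≤ 2 * (A ∆ B).card := by
  decide +revert

lemma measurable_priorityLabel_exceeded {T : Type*} [MeasurableSpace T] {θ : T → Fin 3 → ℝ}
    (hθ : Measurable θ) (k : Fin 3) (x : Fin 3 → ℝ) :
    Measurable fun t => priorityLabel k (exceeded (θ t) x) := by
  have hexceeded (i : Fin 3) : MeasurableSet {t | i ∈ exceeded (θ t) x} := by
    simpa only [mem_exceeded] using
      measurableSet_lt (measurable_pi_iff.mp hθ i) measurable_const
  exact .ite (hexceeded _) measurable_const (.ite (hexceeded _) measurable_const measurable_const)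

end PriorityLabel

section AffineImage

lemma map_affine_volume {s : ℝ} (hs : s ≠ 0) (r : ℝ) :
    (volume : Measure ℝ).map (fun t => s * t + r) = ENNReal.ofReal |s⁻¹| • volume := by
  rw [show (fun t => s * t + r) = (· + r) ∘ (s * ·) from rfl,
    ← Measure.map_map (by fun_prop) (by fun_prop), Real.map_volume_mul_left hs, Measure.map_smul,
    map_add_right_eq_self]

lemma map_restrict_of_eqOn_affine {f : ℝ → ℝ} {s r : ℝ} {A B : Set ℝ} (hs : s ≠ 0)
    (hB : MeasurableSet B) (hA : A = (fun t => s * t + r) ⁻¹' B)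
    (hf : EqOn f (fun t => s * t + r) A) :
    (volume.restrict A).map f = ENNReal.ofReal |s⁻¹| • volume.restrict B := by
  have haffine : Measurable fun t : ℝ => s * t + r := by fun_prop
  have hA' : MeasurableSet A := hA ▸ haffine hB
  rw [Measure.map_congr ((ae_restrict_iff' hA').mpr (.of_forall hf)), hA,
    ← Measure.restrict_map haffine hB, map_affine_volume hs, Measure.restrict_smul]

lemma restrict_Ico_add_restrict_Ico (μ : Measure ℝ) {a b c : ℝ} (hab : a ≤ b) (hbc : b ≤ c) :
    μ.restrict (Ico a b) + μ.restrict (Ico b c) = μ.restrict (Ico a c) := by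
  rw [← Ico_union_Ico_eq_Ico hab hbc,
    Measure.restrict_union (Ico_disjoint_Ico_same) measurableSet_Ico]

end AffineImage

section Threshold

/-- The threshold vector with parameter `t ∈ [0, 1)`. For `t < 2 / 3` it is a coupling of three
uniform variables on `[0, 2 / 3)` with sum `1`: modulo `2 / 3` its coordinates are `t`, `t + 1 / 3`
and `- 2 * t`. For `t ≥ 2 / 3` all coordinates are `t`. -/
noncomputable def threshold (t : ℝ) : Fin 3 → ℝ :=
  if t < 1 / 3 then ![t, t + 1 / 3, 2 / 3 - 2 * t]
  else if t < 2 / 3 then ![t, t - 1 / 3, 4 / 3 - 2 * t]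
  else fun _ => t

lemma threshold_of_lt_third {t : ℝ} (ht : t < 1 / 3) :
    threshold t = ![t, t + 1 / 3, 2 / 3 - 2 * t] :=
  if_pos ht

lemma threshold_of_mem_Ico {t : ℝ} (ht : t ∈ Ico (1 / 3 : ℝ) (2 / 3)) :
    threshold t = ![t, t - 1 / 3, 4 / 3 - 2 * t] := by
  rw [threshold, if_neg ht.1.not_gt, if_pos ht.2]

lemma threshold_of_two_thirds_le {t : ℝ} (ht : 2 / 3 ≤ t) : threshold t = fun _ => t := by
  rw [threshold, if_neg (by linarith), if_neg ht.not_gt]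

lemma threshold_apply_zero (t : ℝ) : threshold t 0 = t := by
  unfold threshold
  split_ifs <;> rfl

lemma sum_threshold_of_lt_two_thirds {t : ℝ} (ht : t < 2 / 3) : ∑ i, threshold t i = 1 := by
  obtain h | h := lt_or_ge t (1 / 3)
  · rw [threshold_of_lt_third h, Fin.sum_univ_three]
    simp
    ring
  · rw [threshold_of_mem_Ico ⟨h, ht⟩, Fin.sum_univ_three]
    simp
    ring

lemma threshold_mem_Ico {t : ℝ} (ht : t ∈ Ico (0 : ℝ) 1) (i : Fin 3) :
    threshold t i ∈ Ico (0 : ℝ) 1 := by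
  obtain ⟨h0, h1⟩ := ht
  unfold threshold
  split_ifs <;> fin_cases i <;> simp <;> constructor <;> linarith

lemma measurable_threshold : Measurable threshold := by
  have hleft : Measurable fun t : ℝ => ![t, t + 1 / 3, 2 / 3 - 2 * t] :=
    Continuous.measurable (by fun_prop)
  have hmiddle : Measurable fun t : ℝ => ![t, t - 1 / 3, 4 / 3 - 2 * t] :=
    Continuous.measurable (by fun_prop)
  exact .ite measurableSet_Iio hleft (.ite measurableSet_Iio hmiddle (by fun_prop))

lemma map_restrict_Ico_zero_one {f : ℝ → ℝ} (hf : Measurable f) :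
    (volume.restrict (Ico 0 1)).map f = (volume.restrict (Ico 0 (1 / 3))).map f +
      (volume.restrict (Ico (1 / 3) (2 / 3))).map f + (volume.restrict (Ico (2 / 3) 1)).map f := by
  rw [← Measure.map_add _ _ hf, restrict_Ico_add_restrict_Ico _ (by norm_num) (by norm_num),
    ← Measure.map_add _ _ hf, restrict_Ico_add_restrict_Ico _ (by norm_num) (by norm_num)]

lemma map_threshold_restrict_two_thirds_one (i : Fin 3) :
    (volume.restrict (Ico (2 / 3) 1)).map (threshold · i) = volume.restrict (Ico (2 / 3) 1) := by
  have h := map_restrict_of_eqOn_affine (f := (threshold · i)) (A := Ico (2 / 3) 1)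
    (r := 0) one_ne_zero measurableSet_Ico (by simp; rfl)
    fun t ht => by simp [threshold_of_two_thirds_le ht.1]
  simpa using h

lemma map_threshold_one :
    (volume.restrict (Ico 0 1)).map (threshold · 1) = volume.restrict (Ico 0 1) := by
  have hleft : (volume.restrict (Ico 0 (1 / 3))).map (threshold · 1) =
      volume.restrict (Ico (1 / 3) (2 / 3)) := by
    have h := map_restrict_of_eqOn_affine (f := (threshold · 1)) (A := Ico 0 (1 / 3))
      (B := Ico (1 / 3) (2 / 3)) (r := 1 / 3) one_ne_zero measurableSet_Ico (by ext; simp; grind)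
      fun t ht => by simp [threshold_of_lt_third ht.2]
    simpa using h
  have hmiddle : (volume.restrict (Ico (1 / 3) (2 / 3))).map (threshold · 1) =
      volume.restrict (Ico 0 (1 / 3)) := by
    have h := map_restrict_of_eqOn_affine (f := (threshold · 1)) (A := Ico (1 / 3) (2 / 3))
      (B := Ico 0 (1 / 3)) (r := -(1 / 3)) one_ne_zero measurableSet_Ico (by ext; simp; grind)
      fun t ht => by simp [threshold_of_mem_Ico ht, sub_eq_add_neg]
    simpa using h
  rw [map_restrict_Ico_zero_one (measurable_pi_iff.mp measurable_threshold 1), hleft, hmiddle,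
    map_threshold_restrict_two_thirds_one, add_comm (volume.restrict (Ico (1 / 3) (2 / 3))),
    restrict_Ico_add_restrict_Ico _ (by norm_num) (by norm_num),
    restrict_Ico_add_restrict_Ico _ (by norm_num) (by norm_num)]

lemma map_threshold_two :
    (volume.restrict (Ico 0 1)).map (threshold · 2) = volume.restrict (Ico 0 1) := by
  have hleft : (volume.restrict (Ico 0 (1 / 3))).map (threshold · 2) =
      ENNReal.ofReal |(-2 : ℝ)⁻¹| • volume.restrict (Ioc 0 (2 / 3)) :=
    map_restrict_of_eqOn_affine (r := 2 / 3) (by norm_num) measurableSet_Ioc (by ext; simp; grind)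
      fun t ht => by simp [threshold_of_lt_third ht.2]; ring
  have hmiddle : (volume.restrict (Ico (1 / 3) (2 / 3))).map (threshold · 2) =
      ENNReal.ofReal |(-2 : ℝ)⁻¹| • volume.restrict (Ioc 0 (2 / 3)) :=
    map_restrict_of_eqOn_affine (r := 4 / 3) (by norm_num) measurableSet_Ioc (by ext; simp; grind)
      fun t ht => by simp [threshold_of_mem_Ico ht]; ring
  have hhalves : ENNReal.ofReal |(-2 : ℝ)⁻¹| + ENNReal.ofReal |(-2 : ℝ)⁻¹| = 1 := by
    rw [← ENNReal.ofReal_add (abs_nonneg _) (abs_nonneg _)]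
    norm_num
  rw [map_restrict_Ico_zero_one (measurable_pi_iff.mp measurable_threshold 2), hleft, hmiddle,
    map_threshold_restrict_two_thirds_one, ← add_smul, hhalves, one_smul,
    ← Measure.restrict_congr_set Ico_ae_eq_Ioc,
    restrict_Ico_add_restrict_Ico _ (by norm_num) (by norm_num)]

lemma map_threshold : ∀ i : Fin 3,
    (volume.restrict (Ico 0 1)).map (threshold · i) = volume.restrict (Ico 0 1)
  | 0 => by simp only [threshold_apply_zero, Measure.map_id']
  | 1 => map_threshold_one
  | 2 => map_threshold_two

lemma ae_threshold_ne (x : Fin 3 → ℝ) : ∀ᵐ t, threshold t ≠ x := by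
  filter_upwards [Measure.ae_ne volume (x 0)] with t ht hx
  exact ht (by rw [← hx, threshold_apply_zero])

end Threshold

section OrderDensity

/-- Density with respect to `t ∈ [0, 1)` of the cut that uses thresholds `threshold t` and the
`k`-th priority order. -/
noncomputable def orderDensity (t : ℝ) (k : Fin 3) : ℝ≥0 :=
  if t < 2 / 3 then if k = 2 then 0 else 6 / 11 else 3 / 11

lemma measurable_orderDensity (k : Fin 3) : Measurable (orderDensity · k) :=
  .ite measurableSet_Iio measurable_const measurable_const

lemma lintegral_sum_orderDensity :
    ∫⁻ t in Ico (0 : ℝ) 1, ∑ k, (orderDensity t k : ℝ≥0∞) = 1 := by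
  have hball : EqOn (fun t => ∑ k, (orderDensity t k : ℝ≥0∞)) (fun _ => (12 / 11 : ℝ≥0))
      (Ico 0 (2 / 3)) := fun t ht => by
    dsimp only
    norm_cast
    simp [orderDensity, ht.2, Fin.sum_univ_three]
    norm_num
  have hcorner : EqOn (fun t => ∑ k, (orderDensity t k : ℝ≥0∞)) (fun _ => (9 / 11 : ℝ≥0))
      (Ico (2 / 3) 1) := fun t ht => by
    dsimp only
    norm_cast
    simp [orderDensity, ht.1.not_gt]
    norm_num
  rw [← restrict_Ico_add_restrict_Ico volume (b := 2 / 3) (by norm_num) (by norm_num),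
    lintegral_add_measure, setLIntegral_congr_fun measurableSet_Ico hball,
    setLIntegral_congr_fun measurableSet_Ico hcorner, setLIntegral_const, setLIntegral_const,
    Real.volume_Ico, Real.volume_Ico, ← ENNReal.ofReal_coe_nnreal, ← ENNReal.ofReal_coe_nnreal,
    ← ENNReal.ofReal_mul (by positivity), ← ENNReal.ofReal_mul (by positivity),
    ← ENNReal.ofReal_add (by norm_num) (by norm_num)]
  norm_num

lemma sum_orderDensity_separatingOrders_le {t : ℝ} {x y : Fin 3 → ℝ}
    (hx : x ∈ stdSimplex ℝ (Fin 3)) (hy : y ∈ stdSimplex ℝ (Fin 3))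
    (htx : threshold t ≠ x) (hty : threshold t ≠ y) :
    ∑ k ∈ separatingOrders (exceeded (threshold t) x) (exceeded (threshold t) y),
        orderDensity t k ≤
      6 / 11 * (exceeded (threshold t) x ∆ exceeded (threshold t) y).card := by
  obtain ht | ht := lt_or_ge t (2 / 3)
  · have hsum := sum_threshold_of_lt_two_thirds ht
    have hcard := card_separatingOrders_erase_two_le
      (exceeded_nonempty_of_sum_eq (hsum.trans hx.2.symm) htx)
      (exceeded_ne_univ_of_sum_eq (hsum.trans hx.2.symm))
      (exceeded_nonempty_of_sum_eq (hsum.trans hy.2.symm) hty)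
      (exceeded_ne_univ_of_sum_eq (hsum.trans hy.2.symm))
    rw [← Finset.sum_erase (a := 2) _ (by simp [orderDensity, ht]),
      Finset.sum_congr rfl fun k hk => show orderDensity t k = 6 / 11 by
        simp [orderDensity, ht, Finset.ne_of_mem_erase hk],
      Finset.sum_const, nsmul_eq_mul, mul_comm]
    gcongr
  · have hhalf (i : Fin 3) : 1 / 2 ≤ threshold t i := by
      rw [threshold_of_two_thirds_le ht]
      linarith
    have hcard := card_separatingOrders_le
      (card_exceeded_le_one hx hhalf) (card_exceeded_le_one hy hhalf)
    rw [Finset.sum_congr rfl fun k _ => show orderDensity t k = 3 / 11 by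
        simp [orderDensity, ht.not_gt],
      Finset.sum_const, nsmul_eq_mul, mul_comm, show (6 / 11 : ℝ≥0) = 3 / 11 * 2 by norm_num,
      mul_assoc]
    gcongr
    exact_mod_cast hcard

end OrderDensity

section RandomCut

/-- The joint law of the priority order and of the threshold parameter. -/
noncomputable def cutMeasure : Measure (Fin 3 × Ico (0 : ℝ) 1) :=
  ∑ k, ((volume.comap Subtype.val).withDensity fun t => (orderDensity t k : ℝ≥0∞)).map (Prod.mk k)

/-- The random cut: the label of `x` for the priority order `ω.1` and the parameter `ω.2`. -/
noncomputable def cut (ω : Fin 3 × Ico (0 : ℝ) 1) (x : Fin 3 → ℝ) : Fin 3 :=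
  priorityLabel ω.1 (exceeded (threshold ω.2) x)

lemma cutMeasure_apply {E : Set (Fin 3 × Ico (0 : ℝ) 1)} (hE : MeasurableSet E) :
    cutMeasure E = ∫⁻ t, ∑ k, E.indicator (fun ω => (orderDensity ω.2 ω.1 : ℝ≥0∞)) (k, t)
      ∂volume.comap Subtype.val := by
  have hsection (k : Fin 3) : MeasurableSet (Prod.mk k ⁻¹' E) := measurable_prodMk_left hE
  have hdensity (k : Fin 3) : Measurable fun t : Ico (0 : ℝ) 1 => (orderDensity t k : ℝ≥0∞) :=
    ((measurable_orderDensity k).comp measurable_subtype_coe).coe_nnreal_ennreal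
  simp_rw [cutMeasure, Measure.finsetSum_apply, Measure.map_apply measurable_prodMk_left hE,
    withDensity_apply _ (hsection _), ← lintegral_indicator (hsection _)]
  rw [← lintegral_finsetSum _ fun k _ => (hdensity k).indicator (hsection k)]
  rfl

instance : IsProbabilityMeasure cutMeasure :=
  ⟨by
    simpa [cutMeasure_apply MeasurableSet.univ] using
      (lintegral_subtype_comap measurableSet_Ico _).trans lintegral_sum_orderDensity⟩

lemma cut_single (ω : Fin 3 × Ico (0 : ℝ) 1) (i : Fin 3) : cut ω (Pi.single i 1) = i := by
  rw [cut, exceeded_single (threshold_mem_Ico ω.2.2), priorityLabel_singleton]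

lemma measurable_cut (x : Fin 3 → ℝ) : Measurable (cut · x) :=
  measurable_from_prod_countable_right fun k =>
    measurable_priorityLabel_exceeded (measurable_threshold.comp measurable_subtype_coe) k x

lemma measurableSet_cut_ne (x y : Fin 3 → ℝ) : MeasurableSet {ω | cut ω x ≠ cut ω y} :=
  (measurableSet_eq_fun (measurable_cut x) (measurable_cut y)).compl

lemma cutMeasure_cut_ne (x y : Fin 3 → ℝ) :
    cutMeasure {ω | cut ω x ≠ cut ω y} =
      ∫⁻ t in Ico (0 : ℝ) 1,
        ((∑ k ∈ separatingOrders (exceeded (threshold t) x) (exceeded (threshold t) y),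
          orderDensity t k : ℝ≥0) : ℝ≥0∞) := by
  rw [cutMeasure_apply (measurableSet_cut_ne x y), ← lintegral_subtype_comap measurableSet_Ico]
  refine lintegral_congr fun t => ?_
  push_cast
  simp [indicator_apply, cut, separatingOrders, Finset.sum_filter]

lemma cutMeasure_cut_ne_le {x y : Fin 3 → ℝ}
    (hx : x ∈ stdSimplex ℝ (Fin 3)) (hy : y ∈ stdSimplex ℝ (Fin 3)) :
    cutMeasure {ω | cut ω x ≠ cut ω y} ≤ ENNReal.ofReal (6 / 11 * ∑ i, |x i - y i|) := by
  have hmap (i : Fin 3) : (volume.restrict (Ico 0 1)).map (threshold · i) ≤ volume :=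
    (map_threshold i).trans_le Measure.restrict_le_self
  calc cutMeasure {ω | cut ω x ≠ cut ω y}
    _ ≤ ∫⁻ t in Ico (0 : ℝ) 1, ((6 / 11 : ℝ≥0) : ℝ≥0∞) *
          (exceeded (threshold t) x ∆ exceeded (threshold t) y).card := by
        rw [cutMeasure_cut_ne]
        refine lintegral_mono_ae (ae_restrict_of_ae ?_)
        filter_upwards [ae_threshold_ne x, ae_threshold_ne y] with t htx hty
        exact_mod_cast sum_orderDensity_separatingOrders_le hx hy htx hty
    _ ≤ ((6 / 11 : ℝ≥0) : ℝ≥0∞) * ENNReal.ofReal (∑ i, |x i - y i|) := by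
        rw [lintegral_const_mul' _ _ ENNReal.coe_ne_top]
        gcongr
        exact lintegral_card_symmDiff_exceeded_le measurable_threshold hmap x y
    _ = ENNReal.ofReal (6 / 11 * ∑ i, |x i - y i|) := by
        rw [ENNReal.ofReal_mul (by positivity), ← ENNReal.ofReal_coe_nnreal]
        norm_num

end RandomCut

end ThreeWayCut

/-- There exists a 3-way cutting scheme whose maximum separation density is
at most `12/11`. -/
theorem exists_three_way_cutting_scheme_density_le :
    ∃ (Ω : Type) (_ : MeasurableSpace Ω) (μ : Measure Ω) (_ : IsProbabilityMeasure μ)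
      (c : Ω → (Fin 3 → ℝ) → Fin 3),
      (∀ ω : Ω, ∀ i : Fin 3, c ω (Pi.single i 1) = i) ∧
      (∀ x ∈ stdSimplex ℝ (Fin 3), ∀ y ∈ stdSimplex ℝ (Fin 3),
        MeasurableSet {ω : Ω | c ω x ≠ c ω y} ∧
        (μ {ω : Ω | c ω x ≠ c ω y}).toReal ≤ (12 / 11) * ((1 / 2) * ∑ i, |x i - y i|)) := by
  refine ⟨Fin 3 × Ico (0 : ℝ) 1, inferInstance, ThreeWayCut.cutMeasure, inferInstance,
    ThreeWayCut.cut, ThreeWayCut.cut_single, fun x hx y hy =>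
      ⟨ThreeWayCut.measurableSet_cut_ne x y, ?_⟩⟩
  calc (ThreeWayCut.cutMeasure {ω | ThreeWayCut.cut ω x ≠ ThreeWayCut.cut ω y}).toReal
    _ ≤ 6 / 11 * ∑ i, |x i - y i| :=
        ENNReal.toReal_le_of_le_ofReal (by positivity) (ThreeWayCut.cutMeasure_cut_ne_le hx hy)
    _ = 12 / 11 * (1 / 2 * ∑ i, |x i - y i|) := by ring
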